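/- There exists an absolute constant C > 0 such that for every real ε ∈ (0, 1/10], every integer t ≥ 1, and every integer v ≥ 0, one has c_{v,ε,t+1} ≤ C·(ε·t + v + 1)·exp(F(n₀)), where c is as defined in the context and F, n₀ are the function and point defined in the context with parameters ε, t, v. -/

import Mathlib

/-- The Chebyshev coefficient `c_{v,ε,t}` of the expansion of `(1 - ε x)^{-t}`:
`c_{v,ε,t} = 2 ∑_{n ≥ v, n - v even} ε^n 2^{-n} C(n-1+t, n) C(n, (n-v)/2)`. -/
noncomputable def chebCoeff (ε : ℝ) (t v : ℕ) : ℝ :=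
  2 * ∑' n : ℕ, if v ≤ n ∧ Even (n - v) then
      ε ^ n * (2:ℝ)⁻¹ ^ n * (Nat.choose (n - 1 + t) n) * (Nat.choose n ((n - v) / 2)) else 0
/-- The function `F(n) = -n log(1/ε) - n log 2 + (n+t) log(n+t) - t log t
- ((n-v)/2) log((n-v)/2) - ((n+v)/2) log((n+v)/2)`. -/
noncomputable def Ffun (ε : ℝ) (t : ℕ) (v : ℝ) (n : ℝ) : ℝ :=
  -n * Real.log (1 / ε) - n * Real.log 2 + (n + t) * Real.log (n + t)
    - t * Real.log t - (n - v) / 2 * Real.log ((n - v) / 2)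
    - (n + v) / 2 * Real.log ((n + v) / 2)

/-- The maximizer `n₀ = (tε² + √(ε²t² + v²(1-ε²)))/(1-ε²)` of `F`. -/
noncomputable def nZero (ε : ℝ) (t : ℕ) (v : ℝ) : ℝ :=
  (t * ε ^ 2 + Real.sqrt (ε ^ 2 * t ^ 2 + v ^ 2 * (1 - ε ^ 2))) / (1 - ε ^ 2)

/-!
With `n = 2a + v` the summand of `c_{v,ε,t+1}` is `(ε/2)^n` times the trinomial coefficient
`n + t` over `(a, a + v, t)`. Bound this coefficient by the trinomial theorem with weights
`(n₀ - v)/2, (n₀ + v)/2, t`, which sum to `n₀ + t`. The saddle equation `F'(n₀) = 0` reads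
`ε²(n₀ + t)² = n₀² - v²`, and it makes the resulting bound independent of `a`: it is exactly
`exp (F n₀)`. So every summand is at most `exp (F n₀)`, while from
`a ≥ ε(t + v)/(1 - ε)` on the summands decay geometrically with ratio `(1 + ε)/2`.
-/

open Finset

lemma multinomial_mul_prod_pow_le {ι R : Type*} [CommSemiring R] [PartialOrder R]
    [IsOrderedRing R] (s : Finset ι) (k : ι → ℕ) {x : ι → R} (hx : ∀ i ∈ s, 0 ≤ x i) :
    Nat.multinomial s k * ∏ i ∈ s, x i ^ k i ≤ (∑ i ∈ s, x i) ^ ∑ i ∈ s, k i := by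
  classical
  set l : ι → ℕ := fun i ↦ if i ∈ s then k i else 0
  have hlk : ∀ i ∈ s, l i = k i := fun i hi ↦ if_pos hi
  have hl : l ∈ piAntidiag s (∑ i ∈ s, k i) := by
    simp +contextual [l, mem_piAntidiag]
  have hprod : ∏ i ∈ s, x i ^ l i = ∏ i ∈ s, x i ^ k i :=
    prod_congr rfl fun i hi ↦ by rw [hlk i hi]
  rw [← Nat.multinomial_congr hlk, ← hprod, sum_pow_eq_sum_piAntidiag]
  exact single_le_sum (f := fun m ↦ (Nat.multinomial s m : R) * ∏ i ∈ s, x i ^ m i)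
    (fun m _ ↦ mul_nonneg (Nat.cast_nonneg _)
      (prod_nonneg fun i hi ↦ pow_nonneg (hx i hi) _)) hl

lemma multinomial_univ_three_spec (a b c : ℕ) :
    a.factorial * b.factorial * c.factorial * Nat.multinomial univ ![a, b, c]
      = (a + b + c).factorial := by
  simpa [Fin.prod_univ_three, Fin.sum_univ_three] using
    Nat.multinomial_spec univ ![a, b, c]

lemma multinomial_univ_three_succ_succ (a b c : ℕ) :
    (a + 1) * (b + 1) * Nat.multinomial univ ![a + 1, b + 1, c]
      = (a + b + c + 2) * (a + b + c + 1) * Nat.multinomial univ ![a, b, c] := by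
  have h := multinomial_univ_three_spec a b c
  have h' := multinomial_univ_three_spec (a + 1) (b + 1) c
  rw [show a + 1 + (b + 1) + c = a + b + c + 1 + 1 by ring] at h'
  simp only [Nat.factorial_succ, ← h] at h'
  have hpos : 0 < a.factorial * b.factorial * c.factorial := by positivity
  refine Nat.eq_of_mul_eq_mul_left hpos ?_
  linarith

lemma choose_mul_choose_eq_multinomial (a b c : ℕ) :
    (a + b + c).choose (a + b) * (a + b).choose a = Nat.multinomial univ ![a, b, c] := by
  have hpos : 0 < a.factorial * b.factorial * c.factorial := by positivity
  refine Nat.eq_of_mul_eq_mul_left hpos ?_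
  rw [multinomial_univ_three_spec, ← Nat.add_choose_mul_factorial_mul_factorial (a + b) c,
    ← Nat.add_choose_mul_factorial_mul_factorial a b, Nat.choose_symm_add, Nat.choose_symm_add]
  ring

lemma tsum_le_of_le_of_succ_le_mul {w : ℕ → ℝ} {E r : ℝ} {A : ℕ} (hw : ∀ a, 0 ≤ w a)
    (hE : ∀ a, w a ≤ E) (hr₀ : 0 ≤ r) (hr₁ : r < 1)
    (hr : ∀ a, A ≤ a → w (a + 1) ≤ r * w a) :
    ∑' a, w a ≤ (A + (1 - r)⁻¹) * E := by
  have hgeom : Summable fun k : ℕ ↦ r ^ k * E :=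
    (summable_geometric_of_lt_one hr₀ hr₁).mul_right E
  have htail_le (k : ℕ) : w (k + A) ≤ r ^ k * E := by
    have hdecay := le_geom (u := fun k ↦ w (k + A)) hr₀ k fun j _ ↦ by
      simpa only [Nat.add_right_comm] using hr (j + A) (Nat.le_add_left A j)
    exact hdecay.trans (by gcongr; exact hE _)
  have htail : Summable fun k ↦ w (k + A) :=
    hgeom.of_nonneg_of_le (fun _ ↦ hw _) htail_le
  calc ∑' a, w a = ∑ a ∈ range A, w a + ∑' k, w (k + A) :=
        (((summable_nat_add_iff A).1 htail).sum_add_tsum_nat_add A).symm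
    _ ≤ A * E + ∑' k : ℕ, r ^ k * E := by
        gcongr
        · simpa using sum_le_card_nsmul (range A) w E fun a _ ↦ hE a
        · exact htail_le _
    _ = (A + (1 - r)⁻¹) * E := by
        rw [tsum_mul_right, tsum_geometric_of_lt_one hr₀ hr₁]; ring

lemma abs_lt_nZero {ε : ℝ} (hε : ε ≠ 0) (hε' : ε ^ 2 < 1) {t : ℕ} (ht : t ≠ 0) (v : ℝ) :
    |v| < nZero ε t v := by
  have hd : 0 < 1 - ε ^ 2 := sub_pos.2 hε'
  have hsqrt : |v| * (1 - ε ^ 2) ≤ √(ε ^ 2 * t ^ 2 + v ^ 2 * (1 - ε ^ 2)) := by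
    apply Real.le_sqrt_of_sq_le
    calc (|v| * (1 - ε ^ 2)) ^ 2 = v ^ 2 * (1 - ε ^ 2) * (1 - ε ^ 2) := by
          rw [mul_pow, sq_abs]; ring
      _ ≤ v ^ 2 * (1 - ε ^ 2) * 1 := by gcongr; linarith [sq_nonneg ε]
      _ ≤ ε ^ 2 * t ^ 2 + v ^ 2 * (1 - ε ^ 2) := by linarith [sq_nonneg (ε * t)]
  rw [nZero, lt_div_iff₀ hd]
  have : 0 < t * ε ^ 2 := by positivity
  linarith

lemma nZero_saddle {ε : ℝ} (hε : ε ^ 2 < 1) (t : ℕ) (v : ℝ) :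
    ε ^ 2 * (nZero ε t v + t) ^ 2 = nZero ε t v ^ 2 - v ^ 2 := by
  have hd : 0 < 1 - ε ^ 2 := sub_pos.2 hε
  have hn : nZero ε t v * (1 - ε ^ 2) - t * ε ^ 2
      = √(ε ^ 2 * t ^ 2 + v ^ 2 * (1 - ε ^ 2)) := by
    rw [nZero, div_mul_cancel₀ _ hd.ne', add_sub_cancel_left]
  have hsq := congrArg (· ^ 2) hn
  simp only [Real.sq_sqrt (show 0 ≤ ε ^ 2 * t ^ 2 + v ^ 2 * (1 - ε ^ 2) by positivity)] at hsq
  apply mul_left_cancel₀ hd.ne'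
  linear_combination -hsq

lemma Ffun_eq_of_saddle {ε : ℝ} (hε : 0 < ε) {t : ℕ} (ht : t ≠ 0) {v n : ℝ} (hvn : |v| < n)
    (hn : ε ^ 2 * (n + t) ^ 2 = n ^ 2 - v ^ 2) :
    Ffun ε t v n = v * Real.log (ε * (n + t) / (n + v)) + t * Real.log ((n + t) / t) := by
  obtain ⟨hv, hv'⟩ := abs_lt.1 hvn
  have hp : 0 < n - v := by linarith
  have hq : 0 < n + v := by linarith
  have hnt : 0 < n + t := by linarith [t.cast_nonneg (α := ℝ)]
  have ht' : (t : ℝ) ≠ 0 := mod_cast ht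
  have hlog : 2 * (Real.log ε + Real.log (n + t)) = Real.log (n - v) + Real.log (n + v) := by
    rw [← Real.log_mul hε.ne' hnt.ne', ← Real.log_mul hp.ne' hq.ne',
      show (n - v) * (n + v) = (ε * (n + t)) ^ 2 by linear_combination -hn, Real.log_pow]
    norm_cast
  rw [Ffun, one_div, Real.log_inv, Real.log_div hp.ne' two_ne_zero,
    Real.log_div hq.ne' two_ne_zero, Real.log_div (by positivity) hq.ne',
    Real.log_div hnt.ne' ht', Real.log_mul hε.ne' hnt.ne']
  linear_combination (n - v) / 2 * hlog

lemma exp_Ffun_of_saddle {ε : ℝ} (hε : 0 < ε) {t : ℕ} (ht : t ≠ 0) {v : ℕ} {n : ℝ}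
    (hvn : v < n) (hn : ε ^ 2 * (n + t) ^ 2 = n ^ 2 - v ^ 2) :
    Real.exp (Ffun ε t v n) = (ε * (n + t) / (n + v)) ^ v * ((n + t) / t) ^ t := by
  have hn₀ : 0 < n := v.cast_nonneg.trans_lt hvn
  rw [Ffun_eq_of_saddle hε ht (by rwa [Nat.abs_cast]) hn, Real.exp_add, Real.exp_nat_mul,
    Real.exp_nat_mul, Real.exp_log (by positivity), Real.exp_log (by positivity)]

/-- The summand of index `n = 2a + v` in half the series for `c_{v,ε,t+1}`, with its product of
two binomial coefficients written as the trinomial coefficient `(2a + v + t)! / (a! (a + v)! t!)`.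
The shift from `t + 1` to `t` removes the subtraction in `C(n - 1 + (t + 1), n)`. -/
noncomputable def chebTerm (ε : ℝ) (t v a : ℕ) : ℝ :=
  (ε / 2) ^ (2 * a + v) * Nat.multinomial univ ![a, a + v, t]

lemma chebTerm_nonneg {ε : ℝ} (hε : 0 ≤ ε) (t v a : ℕ) : 0 ≤ chebTerm ε t v a := by
  unfold chebTerm; positivity

lemma chebCoeff_succ (ε : ℝ) (t v : ℕ) :
    chebCoeff ε (t + 1) v = 2 * ∑' a, chebTerm ε t v a := by
  have hinj : Function.Injective fun a ↦ 2 * a + v := fun a b h ↦ by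
    simpa using h
  rw [chebCoeff, ← hinj.tsum_eq]
  · congr 1
    refine tsum_congr fun a ↦ ?_
    have hshift : (2 * a + v - 1 + (t + 1)).choose (2 * a + v)
        = (2 * a + v + t).choose (2 * a + v) := by
      rcases Nat.eq_zero_or_pos (2 * a + v) with h | h
      · simp [h]
      · congr 1; omega
    have htri := choose_mul_choose_eq_multinomial a (a + v) t
    rw [← add_assoc, ← two_mul] at htri
    rw [if_pos ⟨by omega, by simp⟩, hshift, Nat.add_sub_cancel, Nat.mul_div_cancel_left a two_pos,
      chebTerm, ← htri, div_eq_mul_inv, mul_pow, Nat.cast_mul, mul_assoc]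
  · intro n hn
    obtain ⟨hvn, k, hk⟩ := (ite_ne_right_iff.1 hn).1
    exact ⟨k, by dsimp only; omega⟩

lemma chebTerm_le_of_sq_eq_mul {ε p q : ℝ} (hε : 0 ≤ ε) (hp : 0 < p) (hq : 0 < q) {t : ℕ}
    (ht : t ≠ 0) (hpq : (ε / 2 * (p + q + t)) ^ 2 = p * q) (v a : ℕ) :
    chebTerm ε t v a ≤ (ε / 2 * (p + q + t) / q) ^ v * ((p + q + t) / t) ^ t := by
  have htri : Nat.multinomial univ ![a, a + v, t] * (p ^ a * q ^ (a + v) * (t : ℝ) ^ t)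
      ≤ (p + q + t) ^ (2 * a + v + t) := by
    have hweights : ∀ i ∈ univ, 0 ≤ (![p, q, t] : Fin 3 → ℝ) i := by
      simp [Fin.forall_fin_succ, hp.le, hq.le]
    have h := multinomial_mul_prod_pow_le univ ![a, a + v, t] hweights
    simp only [Fin.prod_univ_three, Fin.sum_univ_three, Matrix.cons_val] at h
    rwa [← add_assoc a, ← two_mul] at h
  have hweight : 0 < p ^ a * q ^ (a + v) * (t : ℝ) ^ t := by positivity
  refine le_of_mul_le_mul_right ?_ hweight
  calc chebTerm ε t v a * (p ^ a * q ^ (a + v) * (t : ℝ) ^ t)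
      ≤ (ε / 2) ^ (2 * a + v) * (p + q + t) ^ (2 * a + v + t) := by
        rw [chebTerm, mul_assoc]; gcongr
    _ = ((ε / 2 * (p + q + t)) ^ 2) ^ a * (ε / 2 * (p + q + t)) ^ v * (p + q + t) ^ t := by
        rw [← pow_mul, ← pow_add, mul_pow, pow_add _ _ t, mul_assoc]
    _ = (ε / 2 * (p + q + t) / q) ^ v * ((p + q + t) / t) ^ t
          * (p ^ a * q ^ (a + v) * (t : ℝ) ^ t) := by
        rw [hpq, div_pow, div_pow, mul_pow p, pow_add q]; field_simp

lemma chebTerm_le_exp_Ffun_nZero {ε : ℝ} (hε : 0 < ε) (hε' : ε < 1) {t : ℕ} (ht : t ≠ 0)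
    (v a : ℕ) : chebTerm ε t v a ≤ Real.exp (Ffun ε t v (nZero ε t v)) := by
  have hsq : ε ^ 2 < 1 := pow_lt_one₀ hε.le hε' two_ne_zero
  have habs := abs_lt_nZero hε.ne' hsq ht v
  have hsaddle := nZero_saddle hsq t v
  rw [exp_Ffun_of_saddle hε ht (by rwa [Nat.abs_cast] at habs) hsaddle]
  set n := nZero ε t v
  obtain ⟨hq, hp⟩ := abs_lt.1 habs
  have hsum : (n - v) / 2 + (n + v) / 2 = n := by ring
  have h := chebTerm_le_of_sq_eq_mul (p := (n - v) / 2) (q := (n + v) / 2) hε.le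
    (by linarith) (by linarith) ht (by rw [hsum]; linear_combination hsaddle / 4) v a
  rwa [hsum, div_mul_eq_mul_div, div_div_div_cancel_right₀ two_ne_zero] at h

lemma chebTerm_succ (ε : ℝ) (t v a : ℕ) :
    chebTerm ε t v (a + 1) = (ε / 2 * (2 * a + v + t + 2)) * (ε / 2 * (2 * a + v + t + 1))
      / ((a + 1) * (a + v + 1)) * chebTerm ε t v a := by
  have h := congrArg (Nat.cast (R := ℝ)) (multinomial_univ_three_succ_succ a (a + v) t)
  push_cast at h
  rw [chebTerm, chebTerm, div_mul_eq_mul_div, eq_div_iff (by positivity),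
    show a + 1 + v = a + v + 1 by ring]
  linear_combination (ε / 2) ^ (2 * a + v + 2) * h

lemma chebTerm_succ_le {ε : ℝ} (hε : 0 ≤ ε) (hε' : ε < 1) {t v a : ℕ}
    (ha : ε * (t + v) ≤ (1 - ε) * a) :
    chebTerm ε t v (a + 1) ≤ (1 + ε) / 2 * chebTerm ε t v a := by
  rw [chebTerm_succ]
  gcongr ?_ * _
  · exact chebTerm_nonneg hε t v a
  have hfirst : ε / 2 * (2 * a + v + t + 2) ≤ (1 + ε) / 2 * (a + 1) := by linarith
  have hsecond : ε / 2 * (2 * a + v + t + 1) ≤ a + v + 1 := by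
    have hεa : ε * a ≤ a := mul_le_of_le_one_left a.cast_nonneg hε'.le
    linarith
  rw [div_le_iff₀ (by positivity)]
  exact (mul_le_mul hfirst hsecond (by positivity) (by positivity)).trans_eq (mul_assoc _ _ _)

theorem stmt_19_general {ε : ℝ} (hε : 0 < ε) (hε' : ε < 1) {t : ℕ} (ht : 1 ≤ t) (v : ℕ) :
    chebCoeff ε (t + 1) v ≤
      6 / (1 - ε) * (ε * t + v + 1) * Real.exp (Ffun ε t v (nZero ε t v)) := by
  have hd : 0 < 1 - ε := sub_pos.2 hε'
  set A := ⌈ε * (t + v) / (1 - ε)⌉₊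
  have hdecay (a : ℕ) (ha : A ≤ a) : chebTerm ε t v (a + 1) ≤ (1 + ε) / 2 * chebTerm ε t v a :=
    chebTerm_succ_le hε.le hε' ((div_le_iff₀' hd).1 (Nat.ceil_le.1 ha))
  have hsum := tsum_le_of_le_of_succ_le_mul (chebTerm_nonneg hε.le t v)
    (chebTerm_le_exp_Ffun_nZero hε hε' (Nat.one_le_iff_ne_zero.1 ht) v)
    (by positivity) (by linarith) hdecay
  have hA : A < ε * (t + v) / (1 - ε) + 1 := Nat.ceil_lt_add_one (by positivity)
  have hcount : A + (1 - (1 + ε) / 2)⁻¹ ≤ 3 / (1 - ε) * (ε * t + v + 1) := by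
    have hεv : ε * v ≤ v := mul_le_of_le_one_left v.cast_nonneg hε'.le
    have hεt : 0 ≤ ε * t := by positivity
    calc A + (1 - (1 + ε) / 2)⁻¹
        ≤ ε * (t + v) / (1 - ε) + 1 + (1 - (1 + ε) / 2)⁻¹ := by gcongr
      _ = (ε * t + ε * v + 3 - ε) / (1 - ε) := by
          rw [show 1 - (1 + ε) / 2 = (1 - ε) / 2 by ring]; field_simp; ring
      _ ≤ 3 * (ε * t + v + 1) / (1 - ε) := by gcongr; linarith
      _ = 3 / (1 - ε) * (ε * t + v + 1) := by ring
  calc chebCoeff ε (t + 1) v = 2 * ∑' a, chebTerm ε t v a := chebCoeff_succ ε t v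
    _ ≤ 2 * (3 / (1 - ε) * (ε * t + v + 1) * Real.exp (Ffun ε t v (nZero ε t v))) := by
        gcongr
        exact hsum.trans (by gcongr)
    _ = 6 / (1 - ε) * (ε * t + v + 1) * Real.exp (Ffun ε t v (nZero ε t v)) := by ring

/-- `c_{v,ε,t+1} ≤ C·(ε·t + v + 1)·exp(F(n₀))`, where `F` and `n₀` are
taken with parameters `ε`, `t`, `v`. -/
theorem stmt_19 :
    ∃ C : ℝ, 0 < C ∧
      ∀ ε : ℝ, ε ∈ Set.Ioc (0:ℝ) (1/10) → ∀ t : ℕ, 1 ≤ t → ∀ v : ℕ,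
        chebCoeff ε (t + 1) v ≤
          C * (ε * t + v + 1) * Real.exp (Ffun ε t v (nZero ε t v)) := by
  refine ⟨20 / 3, by norm_num, fun ε ⟨hε, hε'⟩ t ht v ↦
    (stmt_19_general hε (by linarith) ht v).trans ?_⟩
  gcongr ?_ * _ * _
  rw [div_le_iff₀] <;> linarith
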